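/- Let n ≥ 2, let α ∈ UVP_n, and let u, v be elements of the subgroup ⟨λ_{n−1,n}, λ_{n,n−1}⟩ of UVP_n. Then α and α·[u,v] are fused Markov equivalent, where [u,v] = u^{−1}v^{−1}uv. -/

import Mathlib

/-!  Common setup: the unrestricted virtual braid group `UVB n`, its generators
σ_k, ρ_k (1-based indices), the elements λ_{i,j} and B_{i,j}, the permutation
homomorphism ι (characterized by `IsIota`), the section s : S_n → UVB n
(characterized by `IsPermSection`), and fused Markov equivalence. -/

/-- Generators of the unrestricted virtual braid group `UVB n`:
`Sum.inl i` is the classical generator σ_{i+1} and `Sum.inr i` is the virtual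
generator ρ_{i+1}, for `i : Fin (n-1)` (so the 1-based indices are `1, …, n-1`). -/
abbrev UVBGen (n : ℕ) := Sum (Fin (n - 1)) (Fin (n - 1))

namespace UVBGen
def sg {n : ℕ} (i : Fin (n - 1)) : FreeGroup (UVBGen n) := FreeGroup.of (Sum.inl i)
def rg {n : ℕ} (i : Fin (n - 1)) : FreeGroup (UVBGen n) := FreeGroup.of (Sum.inr i)
end UVBGen

open UVBGen in
/-- The defining relations of the unrestricted virtual braid group. -/
def uvbRels (n : ℕ) : Set (FreeGroup (UVBGen n)) :=
  {r | (∃ i j : Fin (n - 1), (j : ℕ) = (i : ℕ) + 1 ∧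
          (r = sg i * sg j * sg i * (sg j * sg i * sg j)⁻¹ ∨
           r = rg i * rg j * rg i * (rg j * rg i * rg j)⁻¹ ∨
           r = rg i * rg j * sg i * (sg j * rg i * rg j)⁻¹ ∨
           r = rg i * sg j * sg i * (sg j * sg i * rg j)⁻¹ ∨
           r = rg j * sg i * sg j * (sg i * sg j * rg i)⁻¹)) ∨
       (∃ i j : Fin (n - 1), ((i : ℕ) + 2 ≤ (j : ℕ) ∨ (j : ℕ) + 2 ≤ (i : ℕ)) ∧
          (r = sg i * sg j * (sg j * sg i)⁻¹ ∨
           r = rg i * rg j * (rg j * rg i)⁻¹ ∨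
           r = sg i * rg j * (rg j * sg i)⁻¹)) ∨
       (∃ i : Fin (n - 1), r = rg i * rg i)}

/-- The unrestricted virtual braid group on `n` strands. -/
abbrev UVB (n : ℕ) := PresentedGroup (uvbRels n)

namespace UVB

/-- The generator σ_k (1-based index; meaningful for `1 ≤ k ≤ n-1`, junk value `1` otherwise). -/
def sigma (n k : ℕ) : UVB n :=
  if h : 1 ≤ k ∧ k ≤ n - 1 then PresentedGroup.of (Sum.inl ⟨k - 1, by omega⟩) else 1

/-- The generator ρ_k (1-based index; meaningful for `1 ≤ k ≤ n-1`, junk value `1` otherwise). -/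
def rho (n k : ℕ) : UVB n :=
  if h : 1 ≤ k ∧ k ≤ n - 1 then PresentedGroup.of (Sum.inr ⟨k - 1, by omega⟩) else 1

/-- The element λ_{i,j} of `UVB n` (1-based indices `1 ≤ i ≠ j ≤ n`; junk value `1` if `i = j`).
For `i < j`:  `λ_{i,j} = ρ_{j-1}⋯ρ_{i+1} · ρ_i σ_i⁻¹ · ρ_{i+1}⋯ρ_{j-1}` and
`λ_{j,i} = ρ_{j-1}⋯ρ_{i+1} · σ_i⁻¹ ρ_i · ρ_{i+1}⋯ρ_{j-1}`. -/
def lam (n i j : ℕ) : UVB n :=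
  if i < j then
    (((List.range' (i + 1) (j - 1 - i)).reverse.map (rho n)).prod) *
      (rho n i * (sigma n i)⁻¹) *
      (((List.range' (i + 1) (j - 1 - i)).map (rho n)).prod)
  else if j < i then
    (((List.range' (j + 1) (i - 1 - j)).reverse.map (rho n)).prod) *
      ((sigma n j)⁻¹ * rho n j) *
      (((List.range' (j + 1) (i - 1 - j)).map (rho n)).prod)
  else 1

/-- The element `B_{i,j} = ρ_{j-1}ρ_{j-2}⋯ρ_{i+1}ρ_i` for `i < j`, and `1` otherwise. -/
def B (n i j : ℕ) : UVB n :=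
  if i < j then ((List.range' i (j - i)).reverse.map (rho n)).prod else 1

/-- The subgroup `U_j` of `UVB n` generated by `{λ_{i,j}, λ_{j,i} : 1 ≤ i < j}`. -/
def U (n j : ℕ) : Subgroup (UVB n) :=
  Subgroup.closure {x | ∃ i, 1 ≤ i ∧ i < j ∧ (x = lam n i j ∨ x = lam n j i)}

end UVB

/-- `ι : UVB n →* S_n` is the homomorphism sending σ_k and ρ_k to the
transposition (k, k+1) (written 0-based on `Fin n`). -/
def IsIota (n : ℕ) (ι : UVB n →* Equiv.Perm (Fin n)) : Prop :=
  ∀ (k : ℕ) (h1 : 1 ≤ k) (h2 : k ≤ n - 1),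
    ι (UVB.sigma n k) = Equiv.swap ⟨k - 1, by omega⟩ ⟨k, by omega⟩ ∧
    ι (UVB.rho n k) = Equiv.swap ⟨k - 1, by omega⟩ ⟨k, by omega⟩

/-- `s : S_n →* UVB n` is the homomorphism sending the transposition (k, k+1) to ρ_k. -/
def IsPermSection (n : ℕ) (s : Equiv.Perm (Fin n) →* UVB n) : Prop :=
  ∀ (k : ℕ) (h1 : 1 ≤ k) (h2 : k ≤ n - 1),
    s (Equiv.swap ⟨k - 1, by omega⟩ ⟨k, by omega⟩) = UVB.rho n k

/-- The number of orbits of a permutation of `Fin n`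
(= number of fixed points + number of nontrivial cycles). -/
def numOrbits {n : ℕ} (π : Equiv.Perm (Fin n)) : ℕ :=
  (Finset.univ.filter fun x => π x = x).card + π.cycleType.card

namespace UVB

private def embedGen (n : ℕ) : UVBGen n → UVBGen (n + 1)
  | Sum.inl i => Sum.inl ⟨i.val, by have := i.isLt; omega⟩
  | Sum.inr i => Sum.inr ⟨i.val, by have := i.isLt; omega⟩

open UVBGen in
/-- The natural inclusion `UVB n →* UVB (n+1)` (σ_k ↦ σ_k, ρ_k ↦ ρ_k). -/
def incl (n : ℕ) : UVB n →* UVB (n + 1) :=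
  PresentedGroup.toGroup (f := fun x => PresentedGroup.of (embedGen n x)) (by
    have key : (FreeGroup.lift fun x => (PresentedGroup.of (embedGen n x) : UVB (n + 1)))
        = (PresentedGroup.mk (uvbRels (n + 1))).comp (FreeGroup.map (embedGen n)) := by
      ext x
      simp [PresentedGroup.of]
    intro r hr
    rw [key]
    simp only [MonoidHom.comp_apply]
    have hmem : FreeGroup.map (embedGen n) r ∈ uvbRels (n + 1) := by
      have hsg : ∀ i : Fin (n - 1), FreeGroup.map (embedGen n) (sg i)
          = sg (⟨i.val, by have := i.isLt; omega⟩ : Fin (n + 1 - 1)) := by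
        intro i; simp [sg, embedGen]
      have hrg : ∀ i : Fin (n - 1), FreeGroup.map (embedGen n) (rg i)
          = rg (⟨i.val, by have := i.isLt; omega⟩ : Fin (n + 1 - 1)) := by
        intro i; simp [rg, embedGen]
      rcases hr with ⟨i, j, hij, hc⟩ | ⟨i, j, hij, hc⟩ | ⟨i, hc⟩
      · refine Or.inl ⟨⟨i.val, by have := i.isLt; omega⟩, ⟨j.val, by have := j.isLt; omega⟩,
          by simpa using hij, ?_⟩
        rcases hc with h | h | h | h | h <;> subst h <;>
          simp only [map_mul, map_inv, hsg, hrg] <;> tauto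
      · refine Or.inr (Or.inl ⟨⟨i.val, by have := i.isLt; omega⟩, ⟨j.val, by have := j.isLt; omega⟩,
          by simpa using hij, ?_⟩)
        rcases hc with h | h | h <;> subst h <;>
          simp only [map_mul, map_inv, hsg, hrg] <;> tauto
      · refine Or.inr (Or.inr ⟨⟨i.val, by have := i.isLt; omega⟩, ?_⟩)
        subst hc
        simp only [map_mul, hsg, hrg]
    exact (QuotientGroup.eq_one_iff _).mpr (Subgroup.subset_normalClosure hmem))

end UVB

/-- The elementary fused Markov moves on the disjoint union of the groups `UVB n`:
conjugation, and the three right stabilizations (positive, negative, virtual). -/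
inductive MarkovBase : (Σ n, UVB n) → (Σ n, UVB n) → Prop
  | conj (n : ℕ) (α γ : UVB n) : MarkovBase ⟨n, α⟩ ⟨n, γ * α * γ⁻¹⟩
  | stabPos (n : ℕ) (α : UVB n) :
      MarkovBase ⟨n, α⟩ ⟨n + 1, UVB.incl n α * UVB.sigma (n + 1) n⟩
  | stabNeg (n : ℕ) (α : UVB n) :
      MarkovBase ⟨n, α⟩ ⟨n + 1, UVB.incl n α * (UVB.sigma (n + 1) n)⁻¹⟩
  | stabVirt (n : ℕ) (α : UVB n) :
      MarkovBase ⟨n, α⟩ ⟨n + 1, UVB.incl n α * UVB.rho (n + 1) n⟩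

/-- Fused Markov equivalence: the smallest equivalence relation generated by the
elementary Markov moves.  By Kamada's theorem, two unrestricted virtual braids are
fused Markov equivalent iff their closures are equivalent fused links. -/
def Markov : (Σ n, UVB n) → (Σ n, UVB n) → Prop := Relation.EqvGen MarkovBase


namespace UVBProof

section Abstract
variable {G : Type*} [Group G]

/-- The four commutations between `λ_{12}, λ_{21}` and `λ_{23}, λ_{32}`. -/
theorem comm4 (x y X Y : G) (hx : x * x = 1) (hX : X * X = 1)
    (hs : y * Y * y = Y * y * Y) (hr : x * X * x = X * x * X)
    (hm : x * X * y = Y * x * X) (f1 : x * Y * y = Y * y * X) (f2 : X * y * Y = y * Y * x) :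
    Commute (y * x) (Y * X) ∧ Commute (y * x) (X * Y) ∧ Commute (x * y) (Y * X) ∧
      Commute (x * y) (X * Y) := by
  have hx' : ∀ z, x * (x * z) = z := fun z => by rw [← mul_assoc, hx, one_mul]
  have hX' : ∀ z, X * (X * z) = z := fun z => by rw [← mul_assoc, hX, one_mul]
  have ix := inv_eq_of_mul_eq_one_left hx
  have iX := inv_eq_of_mul_eq_one_left hX
  obtain ⟨a, ha⟩ : ∃ a, a = y * x := ⟨_, rfl⟩
  obtain ⟨c, hc⟩ : ∃ c, c = Y * X := ⟨_, rfl⟩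
  obtain ⟨e, he⟩ : ∃ e, e = X * a * X := ⟨_, rfl⟩
  have hy : y = a * x := by rw [ha, mul_assoc, hx, mul_one]
  have hY : Y = c * X := by rw [hc, mul_assoc, hX, mul_one]
  have hXa : X * a = e * X := by rw [he, mul_assoc, hX, mul_one]
  have hXe : X * e = a * X := by rw [he, mul_assoc, hX']
  have hxe : x * e = c * x := by
    have h1 : x * X * (a * x) = c * X * x * X := by rw [← hy, ← hY]; exact hm
    have h2 : x * X * a = c * (X * x * X) * x := by
      rw [← mul_inv_eq_iff_eq_mul, ix]
      simp only [mul_assoc] at h1 ⊢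
      exact h1
    rw [← hr] at h2
    rw [he]
    calc x * (X * a * X) = (x * X * a) * X := by group
      _ = c * x * (X * (x * x) * X) := by rw [h2]; group
      _ = c * x := by rw [hx, mul_one, hX, mul_one]
  have hxc : x * c = e * x := by
    have := congrArg (fun z => x * z * x) hxe
    simp only [mul_assoc, hx, hx', mul_one] at this
    exact this.symm
  have c1 : e * c = c * e := by
    have h1 : x * (c * X) * (a * x) = c * X * (a * x) * X := by rw [← hy, ← hY]; exact f1
    have l : x * (c * X) * (a * x) = e * c * (x * X * x) := by
      calc _ = (x * c) * (X * a) * x := by group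
        _ = e * (x * e) * X * x := by rw [hxc, hXa]; group
        _ = _ := by rw [hxe]; group
    have r : c * X * (a * x) * X = c * e * (x * X * x) := by
      rw [hr]
      calc _ = c * (X * a) * x * X := by group
        _ = _ := by rw [hXa]; group
    rw [l, r] at h1
    exact mul_right_cancel h1
  have c2 : e * a = a * e := by
    have h1 : X * (a * x) * (c * X) = a * x * (c * X) * x := by rw [← hy, ← hY]; exact f2
    have l : X * (a * x) * (c * X) = e * a * (x * X * x) := by
      rw [hr]
      calc _ = (X * a) * (x * c) * X := by group
        _ = e * (X * e) * x * X := by rw [hxc, hXa]; group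
        _ = _ := by rw [hXe]; group
    have r : a * x * (c * X) * x = a * e * (x * X * x) := by
      calc _ = a * (x * c) * X * x := by group
        _ = _ := by rw [hxc]; group
    rw [l, r] at h1
    exact mul_right_cancel h1
  have c3 : a * c = c * a := by
    have h1 : (a * x) * (c * X) * (a * x) = (c * X) * (a * x) * (c * X) := by
      rw [← hy, ← hY]; exact hs
    have l : (a * x) * (c * X) * (a * x) = e * (a * c) * (x * X * x) := by
      calc _ = a * (x * c) * (X * a) * x := by group
        _ = a * e * (x * e) * X * x := by rw [hxc, hXa]; group
        _ = _ := by rw [hxe, ← c2]; group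
    have r : (c * X) * (a * x) * (c * X) = e * (c * a) * (x * X * x) := by
      rw [hr]
      calc _ = c * (X * a) * (x * c) * X := by group
        _ = c * e * (X * e) * x * X := by rw [hxc, hXa]; group
        _ = _ := by rw [hXe, ← c1]; group
    rw [l, r] at h1
    exact mul_left_cancel (mul_right_cancel h1)
  have k1 : x * y = x * a * x⁻¹ := by rw [ix, ha]; simp only [mul_assoc, hx, mul_one]
  have k2 : X * Y = X * c * X⁻¹ := by rw [iX, hc]; simp only [mul_assoc, hX, mul_one]
  rw [← ha, ← hc, k1, k2]
  refine ⟨c3, ?_, ?_, ?_⟩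
  · have : a = X * e * X⁻¹ := by rw [hXe]; group
    rw [this, Commute.conj_iff]
    exact c1
  · have : c = x * e * x⁻¹ := by rw [hxe]; group
    rw [this, Commute.conj_iff]
    exact c2.symm
  · have e1 : x * a * x⁻¹ = (x * X * x) * c * (x * X * x)⁻¹ := by
      rw [eq_mul_inv_iff_mul_eq, ix]
      calc x * a * x * (x * X * x) = x * a * (x * x) * X * x := by group
        _ = x * (a * X) * x := by rw [hx]; group
        _ = x * X * (e * x) := by rw [← hXe]; group
        _ = _ := by rw [← hxc]; group
    have e2 : X * c * X⁻¹ = (x * X * x) * a * (x * X * x)⁻¹ := by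
      rw [eq_mul_inv_iff_mul_eq, iX, hr]
      calc X * c * X * (X * x * X) = X * c * (X * X) * x * X := by group
        _ = X * (c * x) * X := by rw [hX]; group
        _ = X * x * (e * X) := by rw [← hxe]; group
        _ = _ := by rw [← hXa]; group
    rw [e1, e2, Commute.conj_iff]
    exact c3.symm

end Abstract

/-! ### Relations -/

theorem rel_one {n : ℕ} {r : FreeGroup (UVBGen n)} (h : r ∈ uvbRels n) :
    PresentedGroup.mk (uvbRels n) r = 1 :=
  (QuotientGroup.eq_one_iff _).mpr (Subgroup.subset_normalClosure h)

theorem sigma_eq {n k : ℕ} (h1 : 1 ≤ k) (h2 : k ≤ n - 1) :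
    UVB.sigma n k = PresentedGroup.mk (uvbRels n) (UVBGen.sg ⟨k - 1, by omega⟩) := by
  simp only [UVB.sigma, dif_pos (And.intro h1 h2)]; rfl

theorem rho_eq {n k : ℕ} (h1 : 1 ≤ k) (h2 : k ≤ n - 1) :
    UVB.rho n k = PresentedGroup.mk (uvbRels n) (UVBGen.rg ⟨k - 1, by omega⟩) := by
  simp only [UVB.rho, dif_pos (And.intro h1 h2)]; rfl

theorem rho_sq {n k : ℕ} (h1 : 1 ≤ k) (h2 : k ≤ n - 1) : UVB.rho n k * UVB.rho n k = 1 := by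
  rw [rho_eq h1 h2, ← map_mul]
  exact rel_one (Or.inr (Or.inr ⟨_, rfl⟩))

theorem near {n k : ℕ} (h1 : 1 ≤ k) (h2 : k + 1 ≤ n - 1) :
    UVB.sigma n k * UVB.sigma n (k+1) * UVB.sigma n k
      = UVB.sigma n (k+1) * UVB.sigma n k * UVB.sigma n (k+1) ∧
    UVB.rho n k * UVB.rho n (k+1) * UVB.rho n k
      = UVB.rho n (k+1) * UVB.rho n k * UVB.rho n (k+1) ∧
    UVB.rho n k * UVB.rho n (k+1) * UVB.sigma n k
      = UVB.sigma n (k+1) * UVB.rho n k * UVB.rho n (k+1) ∧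
    UVB.rho n k * UVB.sigma n (k+1) * UVB.sigma n k
      = UVB.sigma n (k+1) * UVB.sigma n k * UVB.rho n (k+1) ∧
    UVB.rho n (k+1) * UVB.sigma n k * UVB.sigma n (k+1)
      = UVB.sigma n k * UVB.sigma n (k+1) * UVB.rho n k := by
  rw [rho_eq h1 (by omega), rho_eq (k := k+1) (by omega) h2, sigma_eq h1 (by omega),
    sigma_eq (k := k+1) (by omega) h2]
  have hk : k + 1 - 1 = k - 1 + 1 := by omega
  refine ⟨?_, ?_, ?_, ?_, ?_⟩ <;> rw [← mul_inv_eq_one] <;>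
    simp only [← map_mul, ← map_inv] <;>
    refine rel_one (Or.inl ⟨⟨k - 1, by omega⟩, ⟨k + 1 - 1, by omega⟩, hk, ?_⟩) <;> tauto

theorem far {n k l : ℕ} (h1 : 1 ≤ k) (h2 : k ≤ n - 1) (h3 : 1 ≤ l) (h4 : l ≤ n - 1)
    (h : k + 2 ≤ l ∨ l + 2 ≤ k) :
    Commute (UVB.sigma n k) (UVB.sigma n l) ∧ Commute (UVB.rho n k) (UVB.rho n l) ∧
    Commute (UVB.sigma n k) (UVB.rho n l) := by
  rw [rho_eq h1 h2, rho_eq h3 h4, sigma_eq h1 h2, sigma_eq h3 h4]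
  have hk : k - 1 + 2 ≤ l - 1 ∨ l - 1 + 2 ≤ k - 1 := by omega
  refine ⟨?_, ?_, ?_⟩ <;> unfold Commute SemiconjBy <;> rw [← mul_inv_eq_one] <;>
    simp only [← map_mul, ← map_inv] <;>
    refine rel_one (Or.inr (Or.inl ⟨⟨k - 1, by omega⟩, ⟨l - 1, by omega⟩, hk, ?_⟩)) <;> tauto

theorem incl_sigma {n k : ℕ} (h1 : 1 ≤ k) (h2 : k ≤ n - 1) :
    UVB.incl n (UVB.sigma n k) = UVB.sigma (n + 1) k := by
  have h2' : k ≤ n + 1 - 1 := by omega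
  simp only [UVB.sigma, dif_pos (And.intro h1 h2), dif_pos (And.intro h1 h2'), UVB.incl,
    PresentedGroup.toGroup.of]
  rfl

theorem incl_rho {n k : ℕ} (h1 : 1 ≤ k) (h2 : k ≤ n - 1) :
    UVB.incl n (UVB.rho n k) = UVB.rho (n + 1) k := by
  have h2' : k ≤ n + 1 - 1 := by omega
  simp only [UVB.rho, dif_pos (And.intro h1 h2), dif_pos (And.intro h1 h2'), UVB.incl,
    PresentedGroup.toGroup.of]
  rfl

theorem uvb_mem {n : ℕ} (H : Subgroup (UVB n))
    (h : ∀ k, 1 ≤ k → k ≤ n - 1 → UVB.sigma n k ∈ H ∧ UVB.rho n k ∈ H) (a : UVB n) : a ∈ H := by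
  have : (⊤ : Subgroup (UVB n)) ≤ H := by
    rw [← PresentedGroup.closure_range_of (uvbRels n), Subgroup.closure_le]
    rintro _ ⟨i | i, rfl⟩
    · have := (h (i.val + 1) (by omega) (by have := i.isLt; omega)).1
      have h2 : 1 ≤ i.val + 1 ∧ i.val + 1 ≤ n - 1 := ⟨by omega, by have := i.isLt; omega⟩
      simp only [UVB.sigma, dif_pos h2] at this
      exact this
    · have := (h (i.val + 1) (by omega) (by have := i.isLt; omega)).2
      have h2 : 1 ≤ i.val + 1 ∧ i.val + 1 ≤ n - 1 := ⟨by omega, by have := i.isLt; omega⟩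
      simp only [UVB.rho, dif_pos h2] at this
      exact this
  exact this trivial

section Action
variable {n : ℕ} {x : ℕ → UVB (n + 1)}

local notation "S" => UVB.sigma (n + 1)
local notation "R" => UVB.rho (n + 1)

theorem act_far (hx : ∀ k, 1 ≤ k → k < n → x k = R k * x (k+1) * R k)
    (hw : x n = R n * (S n)⁻¹ ∨ x n = (S n)⁻¹ * R n) {k : ℕ} (hk : 1 ≤ k) (d i : ℕ)
    (hid : i + d = n) (hki : k + 1 < i) :
    Commute (S k) (x i) ∧ Commute (R k) (x i) := by
  induction d generalizing i with
  | zero =>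
    obtain rfl : i = n := by omega
    have a := far (n := i + 1) (k := k) (l := i) hk (by omega) (by omega) (by omega) (by omega)
    have b := far (n := i + 1) (k := i) (l := k) (by omega) (by omega) hk (by omega) (by omega)
    rcases hw with hw | hw <;> rw [hw]
    · exact ⟨a.2.2.mul_right a.1.inv_right, a.2.1.mul_right b.2.2.symm.inv_right⟩
    · exact ⟨a.1.inv_right.mul_right a.2.2, b.2.2.symm.inv_right.mul_right a.2.1⟩
  | succ d ih =>
    have := ih (i+1) (by omega) (by omega)
    have a := far (n := n + 1) (k := k) (l := i) hk (by omega) (by omega) (by omega) (by omega)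
    rw [hx i (by omega) (by omega)]
    exact ⟨(a.2.2.mul_right this.1).mul_right a.2.2, (a.2.1.mul_right this.2).mul_right a.2.1⟩

theorem act_near (hx : ∀ k, 1 ≤ k → k < n → x k = R k * x (k+1) * R k)
    (hw : x n = R n * (S n)⁻¹ ∨ x n = (S n)⁻¹ * R n) (d k : ℕ) (hk : 1 ≤ k)
    (hkd : k + 1 + d = n) :
    Commute (S k * R k) (x (k+1)) ∧ Commute (R k * S k) (x (k+1)) := by
  induction d generalizing k with
  | zero =>
    obtain rfl : k + 1 = n := by omega
    obtain ⟨e1, e2, e3, e4, e5⟩ := near (n := k + 1 + 1) (k := k) hk (by omega)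
    have q1 := rho_sq (n := k + 1 + 1) (k := k) hk (by omega)
    have q2 := rho_sq (n := k + 1 + 1) (k := k + 1) (by omega) (by omega)
    obtain ⟨c1, c2, c3, c4⟩ := comm4 _ _ _ _ q1 q2 e1 e2 e3 e4 e5
    have i2 := inv_eq_of_mul_eq_one_left q2
    rcases hw with hw | hw <;> rw [hw]
    · have : UVB.rho (k + 1 + 1) (k + 1) * (UVB.sigma (k + 1 + 1) (k + 1))⁻¹
        = (UVB.sigma (k + 1 + 1) (k + 1) * UVB.rho (k + 1 + 1) (k + 1))⁻¹ := by
        rw [mul_inv_rev, i2]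
      rw [this]
      exact ⟨c1.inv_right, c3.inv_right⟩
    · have : (UVB.sigma (k + 1 + 1) (k + 1))⁻¹ * UVB.rho (k + 1 + 1) (k + 1)
        = (UVB.rho (k + 1 + 1) (k + 1) * UVB.sigma (k + 1 + 1) (k + 1))⁻¹ := by
        rw [mul_inv_rev, i2]
      rw [this]
      exact ⟨c2.inv_right, c4.inv_right⟩
  | succ d ih =>
    have IH := ih (k+1) (by omega) (by omega)
    have F := act_far hx hw hk d (k+1+1) (by omega) (by omega)
    obtain ⟨e1, e2, e3, e4, e5⟩ := near (n := n + 1) (k := k) hk (by omega)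
    have q1 := rho_sq (n := n + 1) (k := k) hk (by omega)
    have q2 := rho_sq (n := n + 1) (k := k + 1) (by omega) (by omega)
    have hxk := hx (k+1) (by omega) (by omega)
    generalize S k = y at *
    generalize R k = r at *
    generalize S (k+1) = Y at *
    generalize R (k+1) = T at *
    have ir := inv_eq_of_mul_eq_one_left q1
    have iT := inv_eq_of_mul_eq_one_left q2
    -- `T (y r) T = r (Y T) r`
    have hy : y = T * r * Y * r * T := by
      have : y = (r * T)⁻¹ * (Y * r * T) := by rw [← e3]; group
      rw [this, mul_inv_rev, ir, iT]; group
    have k1 : y * r = T * (r * (Y * T) * r⁻¹) * T⁻¹ := by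
      rw [hy, ir, iT]
      calc T * r * Y * r * T * r = T * r * Y * (r * T * r) := by group
        _ = _ := by rw [e2]; group
    have k2 : r * y = T * (r * (T * Y) * r⁻¹) * T⁻¹ := by
      rw [hy, ir, iT]
      calc r * (T * r * Y * r * T) = (r * T * r) * Y * r * T := by group
        _ = _ := by rw [e2]; group
    have k3 : x (k+1) = T * x (k+1+1) * T⁻¹ := by rw [iT]; exact hxk
    have k4 : x (k+1+1) = r * x (k+1+1) * r⁻¹ := by rw [F.2.eq]; group
    rw [k1, k2, k3, Commute.conj_iff, Commute.conj_iff, k4, Commute.conj_iff, Commute.conj_iff]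
    exact IH

theorem act_low (hx : ∀ k, 1 ≤ k → k < n → x k = R k * x (k+1) * R k)
    (hw : x n = R n * (S n)⁻¹ ∨ x n = (S n)⁻¹ * R n) (d i : ℕ) (hi : 1 ≤ i)
    {k : ℕ} (hik : i + 1 + d = k) (hkn : k < n) :
    Commute (S k) (x i) ∧ Commute (R k) (x i) := by
  induction d generalizing i with
  | zero =>
    obtain rfl : i + 1 = k := by omega
    have F := act_far hx hw hi (n - (i+1+1)) (i+1+1) (by omega) (by omega)
    obtain ⟨e1, e2, e3, e4, e5⟩ := near (n := n + 1) (k := i) hi (by omega)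
    have q1 := rho_sq (n := n + 1) (k := i) hi (by omega)
    have q2 := rho_sq (n := n + 1) (k := i + 1) (by omega) (by omega)
    have hx1 := hx i (by omega) (by omega)
    have hx2 := hx (i+1) (by omega) (by omega)
    generalize S i = y at *
    generalize R i = r at *
    generalize S (i+1) = Y at *
    generalize R (i+1) = T at *
    have ir := inv_eq_of_mul_eq_one_left q1
    have iT := inv_eq_of_mul_eq_one_left q2
    have k1 : Y = (r * T) * y * (r * T)⁻¹ := by rw [e3]; group
    have k2 : T = (r * T) * r * (r * T)⁻¹ := by rw [e2]; group
    have k3 : x i = (r * T) * x (i+1+1) * (r * T)⁻¹ := by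
      rw [hx1, hx2, mul_inv_rev, ir, iT]; group
    constructor
    · rw [k1, k3, Commute.conj_iff]; exact F.1
    · have : Commute ((r * T) * r * (r * T)⁻¹) (x i) := by
        rw [k3, Commute.conj_iff]; exact F.2
      rwa [← k2] at this
  | succ d ih =>
    have := ih (i+1) (by omega) (by omega)
    have a := far (n := n + 1) (k := k) (l := i) (by omega) (by omega) (by omega) (by omega)
      (by omega)
    rw [hx i (by omega) (by omega)]
    exact ⟨(a.2.2.mul_right this.1).mul_right a.2.2, (a.2.1.mul_right this.2).mul_right a.2.1⟩

theorem act (hx : ∀ k, 1 ≤ k → k < n → x k = R k * x (k+1) * R k)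
    (hw : x n = R n * (S n)⁻¹ ∨ x n = (S n)⁻¹ * R n) {k i : ℕ} (hk : 1 ≤ k) (hkn : k < n)
    (hi : 1 ≤ i) (hin : i ≤ n) :
    S k * x i = x (Equiv.swap k (k+1) i) * S k ∧ R k * x i = x (Equiv.swap k (k+1) i) * R k := by
  have q1 := rho_sq (n := n + 1) (k := k) hk (by omega)
  have N := act_near hx hw (n - (k+1)) k hk (by omega)
  have hx1 := hx k (by omega) (by omega)
  by_cases h1 : i = k
  · subst h1
    rw [Equiv.swap_apply_left, hx1]
    constructor
    · have := N.1.eq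
      calc _ = (S i * R i * x (i+1)) * R i := by group
        _ = x (i+1) * S i * (R i * R i) := by rw [this]; group
        _ = _ := by rw [q1, mul_one]
    · calc _ = (R i * R i) * x (i+1) * R i := by group
        _ = _ := by rw [q1, one_mul]
  by_cases h2 : i = k + 1
  · subst h2
    rw [Equiv.swap_apply_right, hx1]
    constructor
    · have := N.2.eq
      calc _ = (R k * R k) * S k * x (k+1) := by rw [q1]; group
        _ = R k * (R k * S k * x (k+1)) := by group
        _ = _ := by rw [this]; group
    · calc _ = R k * x (k+1) * (R k * R k) := by rw [q1]; group
        _ = _ := by group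
  rw [Equiv.swap_apply_of_ne_of_ne h1 h2]
  by_cases h3 : i < k
  · exact act_low hx hw (k - i - 1) i hi (by omega) hkn
  · exact act_far hx hw hk (n - i) i (by omega) (by omega)

theorem act_all (hx : ∀ k, 1 ≤ k → k < n → x k = R k * x (k+1) * R k)
    (hw : x n = R n * (S n)⁻¹ ∨ x n = (S n)⁻¹ * R n)
    (ι : UVB n →* Equiv.Perm (Fin n)) (hι : IsIota n ι) (α : UVB n) :
    ∀ j : Fin n, UVB.incl n α * x (j + 1) = x (ι α j + 1) * UVB.incl n α := by
  let H : Subgroup (UVB n) :=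
    { carrier := {α | ∀ j : Fin n, UVB.incl n α * x (j + 1) = x (ι α j + 1) * UVB.incl n α}
      one_mem' := by intro j; simp
      mul_mem' := by
        intro a b ha hb j
        rw [map_mul, map_mul, mul_assoc, hb, ← mul_assoc, ha, mul_assoc]; rfl
      inv_mem' := by
        intro a ha j
        have := ha (ι a⁻¹ j)
        rw [← Equiv.Perm.mul_apply, ← map_mul, mul_inv_cancel, map_one, Equiv.Perm.one_apply] at this
        rw [map_inv, inv_mul_eq_iff_eq_mul, ← mul_assoc, this]; group }
  refine uvb_mem H (fun k h1 h2 => ?_) α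
  have key : ∀ j : Fin n, ((Equiv.swap (⟨k - 1, by omega⟩ : Fin n) ⟨k, by omega⟩ j : Fin n) : ℕ) + 1
      = Equiv.swap k (k+1) (j + 1) := by
    intro j
    simp only [Equiv.swap_apply_def, Fin.ext_iff]
    split_ifs <;> first | omega | (simp; done) | (simp; omega)
  constructor
  · intro j
    rw [(hι k h1 h2).1, key, incl_sigma h1 h2]
    exact (act hx hw h1 (by omega) (by omega) (by have := j.isLt; omega)).1
  · intro j
    rw [(hι k h1 h2).2, key, incl_rho h1 h2]
    exact (act hx hw h1 (by omega) (by omega) (by have := j.isLt; omega)).2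

/-- Pure braids on `n` strands commute with `λ_{n-1,n+1}, λ_{n+1,n-1}, λ_{n,n+1}, λ_{n+1,n}`. -/
theorem pure_comm (hn : 2 ≤ n) (ι : UVB n →* Equiv.Perm (Fin n)) (hι : IsIota n ι) (α : UVB n)
    (hα : α ∈ ι.ker) (w : UVB (n + 1)) (hw : w = R n * (S n)⁻¹ ∨ w = (S n)⁻¹ * R n) :
    Commute (UVB.incl n α) w ∧ Commute (UVB.incl n α) (R (n-1) * w * R (n-1)) := by
  let f : ℕ → UVB (n+1) := fun d => Nat.rec w (fun d g => R (n - (d+1)) * g * R (n - (d+1))) d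
  have hf : ∀ d, f (d+1) = R (n - (d+1)) * f d * R (n - (d+1)) := fun d => rfl
  let x : ℕ → UVB (n+1) := fun i => f (n - i)
  have hx : ∀ k, 1 ≤ k → k < n → x k = R k * x (k+1) * R k := by
    intro k h1 h2
    change f (n - k) = R k * f (n - (k+1)) * R k
    have e : n - k = n - (k+1) + 1 := by omega
    rw [e, hf]
    have e : n - (n - (k+1) + 1) = k := by omega
    rw [e]
  have hxn : x n = w := by
    change f (n - n) = w
    rw [Nat.sub_self]
    rfl
  have A := act_all hx (by rw [hxn]; exact hw) ι hι α
  rw [MonoidHom.mem_ker] at hα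
  rw [hα] at A
  have e : n - 1 + 1 = n := by omega
  constructor
  · have := A ⟨n - 1, by omega⟩
    simp only [Equiv.Perm.one_apply, e, hxn] at this
    exact this
  · have := A ⟨n - 2, by omega⟩
    have e' : n - 2 + 1 = n - 1 := by omega
    have h := hx (n-1) (by omega) (by omega)
    rw [e, hxn] at h
    simp only [Equiv.Perm.one_apply, e', h] at this
    exact this

end Action

theorem mk_conj {n : ℕ} (a g : UVB n) {b : UVB n} (h : g * a = b * g) : Markov ⟨n, a⟩ ⟨n, b⟩ := by
  have : b = g * a * g⁻¹ := by rw [h]; group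
  rw [this]
  exact Relation.EqvGen.rel _ _ (MarkovBase.conj n a g)

/-- Virtual stabilization along a conjugate of the last generator. -/
theorem mk_stab {n : ℕ} (a p : UVB n) :
    Markov ⟨n, a⟩ ⟨n + 1, UVB.incl n a * (UVB.incl n p * UVB.rho (n+1) n * (UVB.incl n p)⁻¹)⟩ := by
  refine Relation.EqvGen.trans _ _ _ (mk_conj a p⁻¹ (b := p⁻¹ * a * p) (by group)) ?_
  refine Relation.EqvGen.trans _ _ _ (Relation.EqvGen.rel _ _ (MarkovBase.stabVirt n _)) ?_
  refine mk_conj _ (UVB.incl n p) ?_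
  simp only [map_mul, map_inv]; group

theorem closure_comm {G : Type*} [Group G] {A B : Set G} (h : ∀ a ∈ A, ∀ b ∈ B, Commute a b)
    {a b : G} (ha : a ∈ Subgroup.closure A) (hb : b ∈ Subgroup.closure B) : Commute a b := by
  have h1 : ∀ b ∈ B, Commute a b := by
    intro b hb
    induction ha using Subgroup.closure_induction with
    | mem x hx => exact h x hx b hb
    | one => exact Commute.one_left b
    | mul x y _ _ hx hy => exact hx.mul_left hy
    | inv x _ hx => exact hx.inv_left
  induction hb using Subgroup.closure_induction with
  | mem x hx => exact h1 x hx
  | one => exact Commute.one_right a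
  | mul x y _ _ hx hy => exact hx.mul_right hy
  | inv x _ hx => exact hx.inv_right

/-- Closure induction for commuting with a homomorphic image of the closure. -/
theorem hom_comm {G K : Type*} [Group G] [Group K] (f : G →* K) {A : Set G} {b : K}
    (h : ∀ a ∈ A, Commute b (f a)) {a : G} (ha : a ∈ Subgroup.closure A) : Commute b (f a) := by
  induction ha using Subgroup.closure_induction with
  | mem x hx => exact h x hx
  | one => rw [map_one]; exact Commute.one_right b
  | mul x y _ _ hx hy => rw [map_mul]; exact hx.mul_right hy
  | inv x _ hx => rw [map_inv]; exact hx.inv_right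


theorem final_conj {G : Type*} [Group G] (b p q m w : G) (h1 : w * q = m * w) (h2 : w * m = q * w)
    (bq : Commute b q) (bm : Commute b m) (pm : Commute p m) (qm : Commute q m) :
    (m⁻¹ * q⁻¹) * (p * b * w) = (q⁻¹ * p * q * b * w) * (m⁻¹ * q⁻¹) := by
  have h1' : w * q⁻¹ = m⁻¹ * w := by
    rw [mul_inv_eq_iff_eq_mul, mul_assoc, h1]; group
  have h2' : w * m⁻¹ = q⁻¹ * w := by
    rw [mul_inv_eq_iff_eq_mul, mul_assoc, h2]; group
  symm
  calc (q⁻¹ * p * q * b * w) * (m⁻¹ * q⁻¹) = q⁻¹ * p * q * b * (w * m⁻¹) * q⁻¹ := by group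
    _ = q⁻¹ * p * q * b * q⁻¹ * (w * q⁻¹) := by rw [h2']; group
    _ = q⁻¹ * p * q * (b * q⁻¹) * m⁻¹ * w := by rw [h1']; group
    _ = q⁻¹ * p * (b * m⁻¹) * w := by rw [bq.inv_right.eq]; group
    _ = q⁻¹ * (p * m⁻¹) * b * w := by rw [bm.inv_right.eq]; group
    _ = (q⁻¹ * m⁻¹) * p * b * w := by rw [pm.inv_right.eq]; group
    _ = _ := by rw [qm.inv_left.inv_right.eq]; group

/-- How `λ_{12}, λ_{21}` are moved by the transpositions `(2 3)` and `(1 3)`. -/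
theorem move3 {G : Type*} [Group G] (x y X Y : G) (hx : x * x = 1) (hX : X * X = 1)
    (hr : x * X * x = X * x * X) (hm : x * X * y = Y * x * X) :
    X * (x * y⁻¹) * X = x * (X * Y⁻¹) * x ∧ X * (y⁻¹ * x) * X = x * (Y⁻¹ * X) * x ∧
    (X * x * X) * (x * y⁻¹) * (X * x * X) = Y⁻¹ * X ∧
    (X * x * X) * (y⁻¹ * x) * (X * x * X) = X * Y⁻¹ := by
  have hx' : ∀ z, x * (x * z) = z := fun z => by rw [← mul_assoc, hx, one_mul]
  have hX' : ∀ z, X * (X * z) = z := fun z => by rw [← mul_assoc, hX, one_mul]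
  have ix := inv_eq_of_mul_eq_one_left hx
  have iX := inv_eq_of_mul_eq_one_left hX
  have hr' : ∀ z, X * (x * (X * z)) = x * (X * (x * z)) := fun z => by
    have := congrArg (· * z) hr
    simp only [mul_assoc] at this
    exact this.symm
  have hr0 : X * (x * X) = x * (X * x) := by simpa only [mul_assoc] using hr.symm
  have hy : y⁻¹ = X * x * Y⁻¹ * x * X := by
    have : y = (x * X)⁻¹ * (Y * x * X) := by rw [← hm]; group
    rw [this]
    simp only [mul_inv_rev, inv_inv, ix, iX, mul_assoc]
  rw [hy]
  refine ⟨?_, ?_, ?_, ?_⟩ <;> simp only [mul_assoc, hx', hX', hr', hr0, hx, hX, mul_one]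

/-- Algebra of four strands. -/
theorem move4 {G : Type*} [Group G] (x y X Y Z W : G) (hx : x * x = 1) (hX : X * X = 1)
    (hZ : Z * Z = 1)
    (hr : x * X * x = X * x * X) (hR : X * Z * X = Z * X * Z) (hxZ : Commute x Z)
    (hm : x * X * y = Y * x * X) (hM : X * Z * Y = W * X * Z) (hyZ : Commute y Z)
    (hxW : Commute x W) :
    (x * X * Z * X * x) * (x * X * Z * X * x) = 1 ∧
    X * (x * X * Z * X * x) = (x * X * Z * X * x) * X ∧
    x * X * Z * X * x = Z * (X * x * X) * Z ∧
    (X * (x * X * Z * X * x)) * x = Z * (X * (x * X * Z * X * x)) ∧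
    (X * (x * X * Z * X * x)) * y = (Z * W * Z) * (X * (x * X * Z * X * x)) := by
  have hx' : ∀ z, x * (x * z) = z := fun z => by rw [← mul_assoc, hx, one_mul]
  have hX' : ∀ z, X * (X * z) = z := fun z => by rw [← mul_assoc, hX, one_mul]
  have hZ' : ∀ z, Z * (Z * z) = z := fun z => by rw [← mul_assoc, hZ, one_mul]
  have e3 : x * X * Z * X * x = Z * (X * x * X) * Z := by
    calc x * X * Z * X * x = x * (X * Z * X) * x := by group
      _ = (x * Z) * X * (Z * x) := by rw [hR]; group
      _ = Z * (x * X) * (Z * x) := by rw [hxZ.eq]; group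
      _ = Z * (x * X * x) * Z := by rw [← hxZ.eq]; group
      _ = _ := by rw [hr]
  have e2 : X * (x * X * Z * X * x) = (x * X * Z * X * x) * X := by
    calc X * (x * X * Z * X * x) = (X * x * X) * Z * X * x := by group
      _ = x * X * (x * Z) * X * x := by rw [← hr]; group
      _ = x * X * Z * (x * X * x) := by rw [hxZ.eq]; group
      _ = _ := by rw [hr]; group
  -- `Q = Z x R` with `R = X x Z X`
  have e4 : X * (x * X * Z * X * x) = Z * x * (X * x * Z * X) := by
    rw [e2, e3]
    calc Z * (X * x * X) * Z * X = Z * (x * X * x) * Z * X := by rw [hr]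
      _ = _ := by group
  have Ry : (X * x * Z * X) * y = W * (X * x * Z * X) := by
    calc (X * x * Z * X) * y = X * (x * Z) * X * y := by group
      _ = X * Z * (x * X * y) := by rw [hxZ.eq]; group
      _ = (X * Z * Y) * x * X := by rw [hm]; group
      _ = W * X * (Z * x) * X := by rw [hM]; group
      _ = _ := by rw [← hxZ.eq]; group
  have Rx : (X * x * Z * X) * x = Z * (X * x * Z * X) := by
    calc (X * x * Z * X) * x = X * (x * Z) * X * x := by group
      _ = X * Z * (x * X * x) := by rw [hxZ.eq]; group
      _ = (X * Z * X) * x * X := by rw [hr]; group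
      _ = Z * X * (Z * x) * X := by rw [hR]; group
      _ = _ := by rw [← hxZ.eq]; group
  refine ⟨?_, e2, e3, ?_, ?_⟩
  · simp only [mul_assoc, hx', hX', hZ', hx]
  · rw [e4]
    calc Z * x * (X * x * Z * X) * x = Z * x * ((X * x * Z * X) * x) := by group
      _ = Z * (x * Z) * (X * x * Z * X) := by rw [Rx]; group
      _ = _ := by rw [hxZ.eq]; group
  · rw [e4]
    calc Z * x * (X * x * Z * X) * y = Z * x * ((X * x * Z * X) * y) := by group
      _ = Z * (x * W) * (X * x * Z * X) := by rw [Ry]; group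
      _ = Z * W * (Z * Z) * x * (X * x * Z * X) := by rw [hxW.eq, hZ]; group
      _ = _ := by group

theorem incl_comm {n : ℕ} (a : UVB n) :
    Commute (UVB.incl (n+1) (UVB.incl n a)) (UVB.rho (n+1+1) (n+1)) := by
  refine Subgroup.mem_centralizer_singleton_iff.mp (uvb_mem ((Subgroup.centralizer
    {UVB.rho (n+1+1) (n+1)}).comap ((UVB.incl (n+1)).comp (UVB.incl n))) (fun k h1 h2 => ?_) a)
  simp only [Subgroup.mem_comap, MonoidHom.comp_apply, Subgroup.mem_centralizer_singleton_iff]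
  rw [incl_sigma h1 h2, incl_rho h1 h2, incl_sigma h1 (by omega), incl_rho h1 (by omega)]
  have := far (n := n+1+1) (k := k) (l := n+1) h1 (by omega) (by omega) (by omega) (by omega)
  exact ⟨this.2.2, this.2.1⟩

theorem lam_up {k : ℕ} (_hk : 1 ≤ k) :
    UVB.lam (k+1) k (k+1) = UVB.rho (k+1) k * (UVB.sigma (k+1) k)⁻¹ := by
  simp [UVB.lam]

theorem lam_down {k : ℕ} (_hk : 1 ≤ k) :
    UVB.lam (k+1) (k+1) k = (UVB.sigma (k+1) k)⁻¹ * UVB.rho (k+1) k := by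
  simp [UVB.lam]

theorem key (k : ℕ) (hk : 1 ≤ k)
    (ι : UVB (k+1) →* Equiv.Perm (Fin (k+1))) (hι : IsIota (k+1) ι)
    (β : UVB (k+1)) (hβ : β ∈ ι.ker) (u v : UVB (k+1))
    (hu : u ∈ Subgroup.closure {UVB.lam (k+1) k (k+1), UVB.lam (k+1) (k+1) k})
    (hv : v ∈ Subgroup.closure {UVB.lam (k+1) k (k+1), UVB.lam (k+1) (k+1) k}) :
    Markov ⟨k+1, β * u⟩ ⟨k+1, β * (v⁻¹ * u * v)⟩ := by
  rw [lam_up hk, lam_down hk] at hu hv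
  -- three strands
  have q1 := rho_sq (n := k+1+1) (k := k) hk (by omega)
  have q2 := rho_sq (n := k+1+1) (k := k+1) (by omega) (by omega)
  obtain ⟨-, r1, m1, -, -⟩ := near (n := k+1+1) (k := k) hk (by omega)
  have P := pure_comm (n := k+1) (by omega) ι hι β hβ
  have ex : UVB.incl (k+1) (UVB.rho (k+1) k) = UVB.rho (k+1+1) k := incl_rho hk (by omega)
  have ey : UVB.incl (k+1) (UVB.sigma (k+1) k) = UVB.sigma (k+1+1) k := incl_sigma hk (by omega)
  -- four strands
  have Q1 := rho_sq (n := k+1+1+1) (k := k) hk (by omega)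
  have Q2 := rho_sq (n := k+1+1+1) (k := k+1) (by omega) (by omega)
  have Q3 := rho_sq (n := k+1+1+1) (k := k+1+1) (by omega) (by omega)
  obtain ⟨-, R1, M1, -, -⟩ := near (n := k+1+1+1) (k := k) hk (by omega)
  obtain ⟨-, R2, M2, -, -⟩ := near (n := k+1+1+1) (k := k+1) (by omega) (by omega)
  obtain ⟨F1, F2, F3⟩ := far (n := k+1+1+1) (k := k) (l := k+1+1) hk (by omega) (by omega)
    (by omega) (by omega)
  obtain ⟨-, -, F4⟩ := far (n := k+1+1+1) (k := k+1+1) (l := k) (by omega) (by omega) hk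
    (by omega) (by omega)
  obtain ⟨T1, T2, T3, T4, T5⟩ := move4 _ _ _ _ _ _ Q1 Q2 Q3 R1 R2 F2 M1 M2 F3 F4.symm
  have Ex : UVB.incl (k+1+1) (UVB.rho (k+1+1) k) = UVB.rho (k+1+1+1) k := incl_rho hk (by omega)
  have Ey : UVB.incl (k+1+1) (UVB.sigma (k+1+1) k) = UVB.sigma (k+1+1+1) k :=
    incl_sigma hk (by omega)
  have EX : UVB.incl (k+1+1) (UVB.rho (k+1+1) (k+1)) = UVB.rho (k+1+1+1) (k+1) :=
    incl_rho (by omega) (by omega)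
  have CZ := fun a : UVB (k+1) => incl_comm a
  have STAB := fun a => mk_stab (n := k+1+1) a (UVB.rho (k+1+1) k * UVB.rho (k+1+1) (k+1))
  have I1 := inv_eq_of_mul_eq_one_left Q1
  have I2 := inv_eq_of_mul_eq_one_left Q2
  have ES : UVB.incl (k+1+1) (UVB.rho (k+1+1) k * UVB.rho (k+1+1) (k+1)) *
      UVB.rho (k+1+1+1) (k+1+1) *
      (UVB.incl (k+1+1) (UVB.rho (k+1+1) k * UVB.rho (k+1+1) (k+1)))⁻¹ =
      UVB.rho (k+1+1+1) k * UVB.rho (k+1+1+1) (k+1) * UVB.rho (k+1+1+1) (k+1+1) *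
      UVB.rho (k+1+1+1) (k+1) * UVB.rho (k+1+1+1) k := by
    rw [map_mul, Ex, EX, mul_inv_rev, I1, I2]; group
  rw [ES] at STAB
  obtain ⟨V1, V2, V3, V4⟩ := move3 _ _ _ _ q1 q2 r1 m1
  have i1 := inv_eq_of_mul_eq_one_left q1
  have i2 := inv_eq_of_mul_eq_one_left q2
  -- stabilization and conjugation on three strands
  have START : ∀ w : UVB (k+1), Markov ⟨k+1, β * w⟩ ⟨k+1+1, UVB.rho (k+1+1) (k+1) *
      UVB.incl (k+1) w * UVB.rho (k+1+1) (k+1) * UVB.incl (k+1) β * UVB.rho (k+1+1) (k+1)⟩ := by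
    intro w
    refine Relation.EqvGen.trans _ _ _
      (Relation.EqvGen.rel _ _ (MarkovBase.stabVirt (k+1) _)) ?_
    refine mk_conj _ (UVB.rho (k+1+1) (k+1) * UVB.incl (k+1) w * UVB.rho (k+1+1) (k+1)) ?_
    rw [map_mul]
    have := fun z => show UVB.rho (k+1+1) (k+1) * (UVB.rho (k+1+1) (k+1) * z) = z by
      rw [← mul_assoc, q2, one_mul]
    simp only [mul_assoc, this]
  refine Relation.EqvGen.trans _ _ _ (START u) ?_
  refine Relation.EqvGen.trans _ _ _ ?_ (Relation.EqvGen.symm _ _ (START (v⁻¹ * u * v)))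
  refine Relation.EqvGen.trans _ _ _ (STAB _) ?_
  refine Relation.EqvGen.trans _ _ _ ?_ (Relation.EqvGen.symm _ _ (STAB _))
  -- commutations on three strands
  have A1 : Commute (UVB.incl (k+1) β)
      (UVB.rho (k+1+1) (k+1) * UVB.incl (k+1) v * UVB.rho (k+1+1) (k+1)) := by
    have := hom_comm (b := UVB.incl (k+1) β)
      ((MulAut.conj (UVB.rho (k+1+1) (k+1))).toMonoidHom.comp (UVB.incl (k+1))) ?_ hv
    · simpa [i2] using this
    · rintro a (rfl | rfl)
      · have := (P _ (Or.inl rfl)).2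
        simp only [Nat.add_sub_cancel, ← V1] at this
        simpa [i2, ex, ey] using this
      · have := (P _ (Or.inr rfl)).2
        simp only [Nat.add_sub_cancel, ← V2] at this
        simpa [i2, ex, ey] using this
  have A2 : Commute (UVB.incl (k+1) β)
      ((UVB.rho (k+1+1) (k+1) * UVB.rho (k+1+1) k * UVB.rho (k+1+1) (k+1)) * UVB.incl (k+1) v *
      (UVB.rho (k+1+1) (k+1) * UVB.rho (k+1+1) k * UVB.rho (k+1+1) (k+1))) := by
    have i3 : (UVB.rho (k+1+1) (k+1) * UVB.rho (k+1+1) k * UVB.rho (k+1+1) (k+1))⁻¹ =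
        UVB.rho (k+1+1) (k+1) * UVB.rho (k+1+1) k * UVB.rho (k+1+1) (k+1) := by
      rw [mul_inv_rev, mul_inv_rev, i1, i2, mul_assoc]
    have := hom_comm (b := UVB.incl (k+1) β)
      ((MulAut.conj (UVB.rho (k+1+1) (k+1) * UVB.rho (k+1+1) k *
        UVB.rho (k+1+1) (k+1))).toMonoidHom.comp (UVB.incl (k+1))) ?_ hv
    · simp only [MonoidHom.comp_apply, MulEquiv.toMonoidHom_eq_coe, MonoidHom.coe_coe,
        MulAut.conj_apply, i3] at this
      exact this
    · rintro a (rfl | rfl)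
      · have := (P _ (Or.inr rfl)).1
        simp only [MonoidHom.comp_apply, MulEquiv.toMonoidHom_eq_coe, MonoidHom.coe_coe,
          MulAut.conj_apply, i3]
        rw [map_mul, map_inv, ex, ey, V3]
        exact this
      · have := (P _ (Or.inl rfl)).1
        simp only [MonoidHom.comp_apply, MulEquiv.toMonoidHom_eq_coe, MonoidHom.coe_coe,
          MulAut.conj_apply, i3]
        rw [map_mul, map_inv, ex, ey, V4]
        exact this
  replace A1 := A1.map (UVB.incl (k+1+1))
  replace A2 := A2.map (UVB.incl (k+1+1))
  have LIFT : ∀ w ∈ Subgroup.closure {UVB.rho (k+1) k * (UVB.sigma (k+1) k)⁻¹,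
      (UVB.sigma (k+1) k)⁻¹ * UVB.rho (k+1) k}, UVB.incl (k+1+1) (UVB.incl (k+1) w) ∈
      Subgroup.closure {UVB.rho (k+1+1+1) k, UVB.sigma (k+1+1+1) k} := by
    intro w hw
    suffices h : Subgroup.closure {UVB.rho (k+1) k * (UVB.sigma (k+1) k)⁻¹,
      (UVB.sigma (k+1) k)⁻¹ * UVB.rho (k+1) k} ≤
      (Subgroup.closure {UVB.rho (k+1+1+1) k, UVB.sigma (k+1+1+1) k}).comap
        ((UVB.incl (k+1+1)).comp (UVB.incl (k+1))) from h hw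
    have g1 : UVB.rho (k+1+1+1) k ∈
      Subgroup.closure {UVB.rho (k+1+1+1) k, UVB.sigma (k+1+1+1) k} :=
      Subgroup.subset_closure (by simp)
    have g2 : UVB.sigma (k+1+1+1) k ∈
      Subgroup.closure {UVB.rho (k+1+1+1) k, UVB.sigma (k+1+1+1) k} :=
      Subgroup.subset_closure (by simp)
    rw [Subgroup.closure_le]
    rintro a (rfl | rfl)
    · simp only [SetLike.mem_coe, Subgroup.mem_comap, MonoidHom.comp_apply, map_mul, map_inv, ex,
        ey, Ex, Ey]
      exact mul_mem g1 (inv_mem g2)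
    · simp only [SetLike.mem_coe, Subgroup.mem_comap, MonoidHom.comp_apply, map_mul, map_inv, ex,
        ey, Ex, Ey]
      exact mul_mem (inv_mem g2) g1
  have HU := LIFT u hu
  have HV := LIFT v hv
  have CZb := CZ β
  have CZv := CZ v
  simp only [map_mul, map_inv, Ex, EX] at A1 A2 ⊢
  clear STAB START P LIFT CZ V1 V2 V3 V4 ES
  generalize UVB.incl (k+1+1) (UVB.incl (k+1) u) = U at *
  generalize UVB.incl (k+1+1) (UVB.incl (k+1) v) = V at *
  generalize UVB.incl (k+1+1) (UVB.incl (k+1) β) = b at *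
  have J3 := inv_eq_of_mul_eq_one_left Q3
  generalize UVB.rho (k+1+1+1) (k+1+1) = Z at *
  generalize UVB.rho (k+1+1+1) (k+1) = X at *
  generalize UVB.rho (k+1+1+1) k = x at *
  generalize UVB.sigma (k+1+1+1) (k+1+1) = W at *
  generalize UVB.sigma (k+1+1+1) (k+1) = Y at *
  generalize UVB.sigma (k+1+1+1) k = y at *
  generalize x * X * Z * X * x = s at *
  have is := inv_eq_of_mul_eq_one_left T1
  have A3 : Commute b (s * V * s) := by
    have : s * V * s = Z * (X * x * X * V * (X * x * X)) * Z := by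
      rw [T3]
      calc Z * (X * x * X) * Z * V * (Z * (X * x * X) * Z)
          = Z * (X * x * X) * (Z * V) * Z * (X * x * X) * Z := by group
        _ = Z * (X * x * X) * V * (Z * Z) * (X * x * X) * Z := by rw [← CZv.eq]; group
        _ = _ := by rw [Q3]; group
    rw [this]
    exact (CZb.mul_right A2).mul_right CZb
  -- the elements `U, V` commute with `(X s) V (X s)⁻¹`
  have B : ∀ w ∈ Subgroup.closure {x, y}, Commute (X * w * X) (s * V * s) := by
    intro w hw
    have c : Commute w ((MulAut.conj (X * s)).toMonoidHom V) := by
      refine hom_comm _ ?_ HV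
      have c1 : Commute w Z := closure_comm (B := {Z}) (by
        rintro a (rfl | rfl) b rfl
        · exact F2
        · exact F3) hw (Subgroup.subset_closure rfl)
      have c2 : Commute w W := closure_comm (B := {W}) (by
        rintro a (rfl | rfl) b rfl
        · exact F4.symm
        · exact F1) hw (Subgroup.subset_closure rfl)
      rintro a (rfl | rfl)
      · simp only [MulEquiv.toMonoidHom_eq_coe, MonoidHom.coe_coe, MulAut.conj_apply, T4]
        rw [mul_inv_cancel_right]
        exact c1
      · simp only [MulEquiv.toMonoidHom_eq_coe, MonoidHom.coe_coe, MulAut.conj_apply, T5]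
        rw [mul_inv_cancel_right]
        exact (c1.mul_right c2).mul_right c1
    simp only [MulEquiv.toMonoidHom_eq_coe, MonoidHom.coe_coe, MulAut.conj_apply] at c
    have e1 : X * w * X = X * w * X⁻¹ := by rw [I2]
    have e2 : s * V * s = X * (X * s * V * (X * s)⁻¹) * X⁻¹ := by
      rw [mul_inv_rev, I2, is]
      calc s * V * s = (X * X) * s * V * s * (X * X) := by rw [Q2]; group
        _ = _ := by group
    rw [e1, e2, Commute.conj_iff]
    exact c
  have h1 : (X * s) * (X * V * X) = (s * V * s) * (X * s) := by
    rw [T2]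
    calc s * X * (X * V * X) = s * (X * X) * V * X := by group
      _ = s * V * (s * s) * X := by rw [Q2, T1]; group
      _ = _ := by group
  have h2 : (X * s) * (s * V * s) = (X * V * X) * (X * s) := by
    calc X * s * (s * V * s) = X * (s * s) * V * s := by group
      _ = X * V * (X * X) * s := by rw [Q2, T1]; group
      _ = _ := by group
  have FIN := final_conj b (X * U * X) (X * V * X) (s * V * s) (X * s) h1 h2 A1 A3 (B U HU) (B V HV)
  refine mk_conj _ ((s * V * s)⁻¹ * (X * V * X)⁻¹) ?_
  have e1 : X * U * X * b * X * s = X * U * X * b * (X * s) := by group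
  have e2 : X * (V⁻¹ * U * V) * X * b * X * s =
      (X * V * X)⁻¹ * (X * U * X) * (X * V * X) * b * (X * s) := by
    rw [mul_inv_rev, mul_inv_rev, I2]
    calc _ = X * V⁻¹ * 1 * U * 1 * V * X * b * X * s := by group
      _ = X * V⁻¹ * (X * X) * U * (X * X) * V * X * b * X * s := by rw [Q2]
      _ = _ := by group
  rw [e1, e2]
  exact FIN

theorem lam_pure (k : ℕ) (hk : 1 ≤ k)
    (ι : UVB (k+1) →* Equiv.Perm (Fin (k+1))) (hι : IsIota (k+1) ι) (u : UVB (k+1))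
    (hu : u ∈ Subgroup.closure {UVB.lam (k+1) k (k+1), UVB.lam (k+1) (k+1) k}) : u ∈ ι.ker := by
  rw [lam_up hk, lam_down hk] at hu
  refine (Subgroup.closure_le (K := ι.ker)).mpr ?_ hu
  have h := hι k hk (by omega)
  rintro a (rfl | rfl) <;>
    simp only [SetLike.mem_coe, MonoidHom.mem_ker, map_mul, map_inv, h.1, h.2] <;> simp

end UVBProof

/-! ## Statement 8 -/

/-- Lemma 4 of the paper.  For `n ≥ 2`, `α ∈ UVP n` and
`u, v ∈ ⟨λ_{n−1,n}, λ_{n,n−1}⟩`, the braids α and α·[u,v] are fused Markov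
equivalent, where [u,v] = u⁻¹v⁻¹uv. -/
theorem statement8 (n : ℕ) (hn : 2 ≤ n)
    (ι : UVB n →* Equiv.Perm (Fin n)) (hι : IsIota n ι)
    (α : UVB n) (hα : α ∈ ι.ker) (u v : UVB n)
    (hu : u ∈ Subgroup.closure {UVB.lam n (n - 1) n, UVB.lam n n (n - 1)})
    (hv : v ∈ Subgroup.closure {UVB.lam n (n - 1) n, UVB.lam n n (n - 1)}) :
    Markov ⟨n, α⟩ ⟨n, α * (u⁻¹ * v⁻¹ * u * v)⟩ := by
  obtain ⟨k, rfl⟩ : ∃ k, n = k + 1 := ⟨n - 1, by omega⟩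
  simp only [Nat.add_sub_cancel] at hu hv
  have := UVBProof.key k (by omega) ι hι (α * u⁻¹)
    (mul_mem hα (inv_mem (UVBProof.lam_pure k (by omega) ι hι u hu))) u v hu hv
  rw [inv_mul_cancel_right] at this
  have e : α * (u⁻¹ * v⁻¹ * u * v) = α * u⁻¹ * (v⁻¹ * u * v) := by group
  rw [e]
  exact this
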